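/- arXiv:1307.1170 — 5 statements merged into one kernel-verified Lean document; each statement's English description precedes it below -/
import Mathlib

section
/- In a golden history, reciprocity of force carriers holds pointwise: if at time t₁ the force carrier c belongs to the force set φ_{t₁}(x, a, y) that person x directs at person y over good a, then there exists a later time t₂ > t₁ at which c belongs to the force set φ_{t₂}(y, a, x) that person y directs at person x over the same good a. (Theorem 1, the law of reciprocity for individuals.) -/
/-- A golden social state over persons `P`, goods `E`, force carriers `C`,
with maximum idle periods `θ`.  It consists of a golden power function `pow`
(whose values partition `C`), an idle function `idle` bounded by `θ`, and a
golden force function `force` with `force x a y ⊆ pow x a y`, such that any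
carrier whose idle counter has reached its maximum must be exercised. -/
structure GoldenState (P E C : Type*) (θ : C → ℕ) where
  pow : P → E → P → Set C
  idle : C → ℕ
  force : P → E → P → Set C
  pow_disjoint : ∀ x₁ a₁ y₁ x₂ a₂ y₂, (x₁, a₁, y₁) ≠ (x₂, a₂, y₂) →
    Disjoint (pow x₁ a₁ y₁) (pow x₂ a₂ y₂)
  pow_union : (⋃ x, ⋃ a, ⋃ y, pow x a y) = Set.univ
  idle_le : ∀ c, idle c ≤ θ c
  force_sub : ∀ x a y, force x a y ⊆ pow x a y
  force_of_max : ∀ c x a y, idle c = θ c → c ∈ pow x a y → c ∈ force x a y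

/-- The successor relation on golden social states: exercised carriers are
transferred to the reciprocal triple and their idle counters are reset;
unexercised carriers stay put and their idle counters increase. -/
def Successor {P E C : Type*} {θ : C → ℕ} (σ σ' : GoldenState P E C θ) : Prop :=
  (∀ x a y, σ'.pow x a y = (σ.pow x a y \ σ.force x a y) ∪ σ.force y a x) ∧
  (∀ c x a y, c ∈ σ.pow x a y →
    (c ∈ σ.force x a y → σ'.idle c = 0) ∧
    (c ∉ σ.force x a y → σ'.idle c = σ.idle c + 1))

/-- A golden history: an infinite sequence of golden social states, each a
successor of the previous one. -/
def GoldenHistory {P E C : Type*} {θ : C → ℕ} (σ : ℕ → GoldenState P E C θ) : Prop :=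
  ∀ t, Successor (σ t) (σ (t + 1))
/-- Theorem 1 (law of reciprocity for individuals): in a golden history, if at
time `t₁` carrier `c` is in the force set that `x` directs at `y` over good `a`,
then at some later time `t₂ > t₁` carrier `c` is in the force set that `y`
directs at `x` over `a`. -/
theorem golden_reciprocity_pointwise
    {P E C : Type*} [Fintype P] [Nonempty P] [Fintype E] [Nonempty E]
    [Fintype C] [Nonempty C] {θ : C → ℕ} (hθ : ∀ c, 1 ≤ θ c)
    (σ : ℕ → GoldenState P E C θ) (hist : GoldenHistory σ)
    (t₁ : ℕ) (c : C) (x y : P) (a : E) (h : c ∈ (σ t₁).force x a y) :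
    ∃ t₂, t₁ < t₂ ∧ c ∈ (σ t₂).force y a x := by
  by_contra hne
  push Not at hne
  have key : ∀ n, c ∈ (σ (t₁ + 1 + n)).pow y a x ∧ n ≤ (σ (t₁ + 1 + n)).idle c := by
    intro n
    induction n with
    | zero =>
      refine ⟨?_, Nat.zero_le _⟩
      have := (hist t₁).1 y a x
      rw [Nat.add_zero, this]
      exact Or.inr h
    | succ k ih =>
      have hn := hne (t₁ + 1 + k) (by omega)
      have hs := hist (t₁ + 1 + k)
      have h1 := hs.1 y a x
      have h2 := (hs.2 c y a x ih.1).2 hn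
      refine ⟨?_, ?_⟩
      · rw [← Nat.add_assoc, h1]
        exact Or.inl ⟨ih.1, hn⟩
      · rw [← Nat.add_assoc, h2]
        have := ih.2
        omega
  have h1 := (key (θ c + 1)).2
  have h2 := (σ (t₁ + 1 + (θ c + 1))).idle_le c
  omega
end

section
/- In a golden history, reciprocity of force carriers holds for groups: if at time t₁ the force carrier c belongs to the extended force set φ*_{t₁}(X, a, Y) = ⋃_{x ∈ X, y ∈ Y} φ_{t₁}(x, a, y) that the group X ⊆ P directs at the group Y ⊆ P over good a, then there exists a later time t₂ > t₁ at which c belongs to the extended force set φ*_{t₂}(Y, a, X) = ⋃_{y ∈ Y, x ∈ X} φ_{t₂}(y, a, x) that the group Y directs at the group X over the same good a. (Theorem 2, the law of reciprocity for groups.) -/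
/-- The extended golden force function: the union of the force sets directed
by members of `X` at members of `Y` over good `a`. -/
def extForce {P E C : Type*} {θ : C → ℕ} (σ : GoldenState P E C θ)
    (X : Set P) (a : E) (Y : Set P) : Set C :=
  ⋃ x ∈ X, ⋃ y ∈ Y, σ.force x a y

theorem exists_force {P E C : Type*} {θ : C → ℕ}
    (σ : ℕ → GoldenState P E C θ) (hist : GoldenHistory σ) (c : C) (x y : P) (a : E) :
    ∀ n t, (σ t).idle c + n = θ c → c ∈ (σ t).pow x a y →
      ∃ s, t ≤ s ∧ c ∈ (σ s).force x a y := by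
  intro n
  induction n with
  | zero => exact fun t hn hp => ⟨t, le_rfl, (σ t).force_of_max c x a y hn hp⟩
  | succ n ih =>
    intro t hn hp
    by_cases hf : c ∈ (σ t).force x a y
    · exact ⟨t, le_rfl, hf⟩
    · have h1 := ((hist t).2 c x a y hp).2 hf
      obtain ⟨s, hs, h2⟩ := ih (t + 1) (by omega)
        (by rw [(hist t).1]; exact Or.inl ⟨hp, hf⟩)
      exact ⟨s, by omega, h2⟩

/-- Theorem 2 (law of reciprocity for groups): in a golden history, if at time
`t₁` carrier `c` is in the extended force set that group `X` directs at group
`Y` over good `a`, then at some later time `t₂ > t₁` carrier `c` is in the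
extended force set that `Y` directs at `X` over `a`. -/
theorem golden_reciprocity_groups
    {P E C : Type*} [Fintype P] [Nonempty P] [Fintype E] [Nonempty E]
    [Fintype C] [Nonempty C] {θ : C → ℕ} (hθ : ∀ c, 1 ≤ θ c)
    (σ : ℕ → GoldenState P E C θ) (hist : GoldenHistory σ)
    (t₁ : ℕ) (c : C) (X Y : Set P) (a : E) (h : c ∈ extForce (σ t₁) X a Y) :
    ∃ t₂, t₁ < t₂ ∧ c ∈ extForce (σ t₂) Y a X := by
  simp only [extForce, Set.mem_iUnion, exists_prop] at h ⊢
  obtain ⟨x, hx, y, hy, hf⟩ := h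
  have hp : c ∈ (σ (t₁ + 1)).pow y a x := by
    rw [(hist t₁).1]; exact Or.inr hf
  obtain ⟨s, hs, h2⟩ := exists_force σ hist c y x a _ (t₁ + 1)
    (Nat.add_sub_of_le ((σ (t₁ + 1)).idle_le c)) hp
  exact ⟨s, by omega, y, hy, x, hx, h2⟩
end

section
/- Quantitative reciprocity in a golden history: if at time t₁ the force carrier c belongs to the force set φ_{t₁}(x, a, y), then there exists a time t₂ with t₁ < t₂ ≤ t₁ + θ(c) + 1 such that c belongs to φ_{t₂}(y, a, x). (Quantitative refinement of Theorem 1: the reciprocal desire must occur within θ(c) + 1 time steps.) -/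
/-- Quantitative reciprocity: if at time `t₁` carrier `c` is in the force set
`φ_{t₁}(x, a, y)`, then there is a time `t₂` with `t₁ < t₂ ≤ t₁ + θ c + 1`
such that `c ∈ φ_{t₂}(y, a, x)`. -/
theorem golden_reciprocity_quantitative
    {P E C : Type*} [Fintype P] [Nonempty P] [Fintype E] [Nonempty E]
    [Fintype C] [Nonempty C] {θ : C → ℕ} (hθ : ∀ c, 1 ≤ θ c)
    (σ : ℕ → GoldenState P E C θ) (hist : GoldenHistory σ)
    (t₁ : ℕ) (c : C) (x y : P) (a : E) (h : c ∈ (σ t₁).force x a y) :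
    ∃ t₂, t₁ < t₂ ∧ t₂ ≤ t₁ + θ c + 1 ∧ c ∈ (σ t₂).force y a x := by
  by_contra hne
  push Not at hne
  have key : ∀ k, k ≤ θ c → c ∈ (σ (t₁ + 1 + k)).pow y a x ∧ (σ (t₁ + 1 + k)).idle c = k := by
    intro k
    induction k with
    | zero =>
      intro _
      refine ⟨?_, ((hist t₁).2 c x a y ((σ t₁).force_sub x a y h)).1 h⟩
      have := (hist t₁).1 y a x
      rw [Nat.add_zero, this]
      exact Or.inr h
    | succ k ih =>
      intro hk
      obtain ⟨hp, hi⟩ := ih (by omega)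
      have hn := hne (t₁ + 1 + k) (by omega) (by omega)
      refine ⟨?_, ?_⟩
      · have := (hist (t₁ + 1 + k)).1 y a x
        rw [← Nat.add_assoc, this]
        exact Or.inl ⟨hp, hn⟩
      · have := ((hist (t₁ + 1 + k)).2 c y a x hp).2 hn
        rw [← Nat.add_assoc, this, hi]
  obtain ⟨hp, hi⟩ := key (θ c) le_rfl
  exact hne (t₁ + 1 + θ c) (by omega) (by omega) ((σ _).force_of_max c y a x hi hp)
end

section
/- In a golden history, every force carrier is exercised infinitely often: for every force carrier c ∈ C and every time t ∈ ℕ, there exist a time t' ≥ t and persons x, y ∈ P and a good a ∈ E such that c ∈ φ_{t'}(x, a, y). (Key intermediate claim underlying the proof of Theorem 1: a carrier cannot remain idle forever, since its idle counter would exceed the maximum idle period θ(c).) -/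
/-- In a golden history, every force carrier is exercised infinitely often:
for every carrier `c` and time `t` there are `t' ≥ t`, persons `x, y`, and a
good `a` with `c ∈ φ_{t'}(x, a, y)`. -/
theorem golden_carrier_exercised_infinitely_often
    {P E C : Type*} [Fintype P] [Nonempty P] [Fintype E] [Nonempty E]
    [Fintype C] [Nonempty C] {θ : C → ℕ} (hθ : ∀ c, 1 ≤ θ c)
    (σ : ℕ → GoldenState P E C θ) (hist : GoldenHistory σ)
    (c : C) (t : ℕ) :
    ∃ t', t ≤ t' ∧ ∃ x y : P, ∃ a : E, c ∈ (σ t').force x a y := by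
  by_contra h
  push Not at h
  have key : ∀ n, (σ (t + n)).idle c = (σ t).idle c + n := by
    intro n
    induction n with
    | zero => rfl
    | succ n ih =>
      have hc : c ∈ (⋃ x, ⋃ a, ⋃ y, (σ (t + n)).pow x a y) := by
        rw [(σ (t + n)).pow_union]; exact Set.mem_univ c
      simp only [Set.mem_iUnion] at hc
      obtain ⟨x, a, y, hxy⟩ := hc
      have h1 := ((hist (t + n)).2 c x a y hxy).2 (h (t + n) (Nat.le_add_right t n) x y a)
      rw [← add_assoc, h1, ih]; rfl
  have h1 := key (θ c + 1)
  have h2 := (σ (t + (θ c + 1))).idle_le c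
  omega
end

section
/- The successor law preserves the partition property of the golden power function: if π : P × E × P → Set C is a golden power function (its values are pairwise disjoint for distinct triples and their union is all of C) and φ : P × E × P → Set C satisfies φ(x, a, y) ⊆ π(x, a, y) for all x, y ∈ P and a ∈ E, then the function π' defined by π'(x, a, y) = (π(x, a, y) \ φ(x, a, y)) ∪ φ(y, a, x) is again a golden power function, i.e., its values are pairwise disjoint for distinct triples and their union over all triples equals C. (Implicit well-definedness claim needed for the successor relation of golden social states.) -/
/-- The successor law preserves the partition property of the golden power
function: if the values of `π` are pairwise disjoint with union all of `C`,
and `φ x a y ⊆ π x a y` everywhere, then the values of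
`π' x a y = (π x a y \ φ x a y) ∪ φ y a x` are again pairwise disjoint with
union all of `C`. -/
theorem successor_preserves_partition
    {P E C : Type*} [Fintype P] [Nonempty P] [Fintype E] [Nonempty E]
    [Fintype C] [Nonempty C]
    (π φ : P → E → P → Set C)
    (hdisj : ∀ x₁ a₁ y₁ x₂ a₂ y₂, (x₁, a₁, y₁) ≠ (x₂, a₂, y₂) →
      Disjoint (π x₁ a₁ y₁) (π x₂ a₂ y₂))
    (hunion : (⋃ x, ⋃ a, ⋃ y, π x a y) = Set.univ)
    (hsub : ∀ x a y, φ x a y ⊆ π x a y) :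
    (∀ x₁ a₁ y₁ x₂ a₂ y₂, (x₁, a₁, y₁) ≠ (x₂, a₂, y₂) →
      Disjoint ((π x₁ a₁ y₁ \ φ x₁ a₁ y₁) ∪ φ y₁ a₁ x₁)
               ((π x₂ a₂ y₂ \ φ x₂ a₂ y₂) ∪ φ y₂ a₂ x₂)) ∧
    (⋃ x, ⋃ a, ⋃ y, ((π x a y \ φ x a y) ∪ φ y a x)) = Set.univ := by
  have key : ∀ c x₁ a₁ y₁ x₂ a₂ y₂, c ∈ π x₁ a₁ y₁ → c ∈ π x₂ a₂ y₂ →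
      x₁ = x₂ ∧ a₁ = a₂ ∧ y₁ = y₂ := by
    intro c x₁ a₁ y₁ x₂ a₂ y₂ h₁ h₂
    by_contra hne
    refine Set.disjoint_left.mp (hdisj x₁ a₁ y₁ x₂ a₂ y₂ ?_) h₁ h₂
    intro h
    simp only [Prod.mk.injEq] at h
    exact hne h
  constructor
  · intro x₁ a₁ y₁ x₂ a₂ y₂ hne
    rw [Set.disjoint_left]
    rintro c (⟨h₁, n₁⟩ | h₁) (⟨h₂, n₂⟩ | h₂)
    · obtain ⟨rfl, rfl, rfl⟩ := key _ _ _ _ _ _ _ h₁ h₂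
      exact hne rfl
    · obtain ⟨rfl, rfl, rfl⟩ := key _ _ _ _ _ _ _ h₁ (hsub _ _ _ h₂)
      exact n₁ h₂
    · obtain ⟨rfl, rfl, rfl⟩ := key _ _ _ _ _ _ _ (hsub _ _ _ h₁) h₂
      exact n₂ h₁
    · obtain ⟨rfl, rfl, rfl⟩ := key _ _ _ _ _ _ _ (hsub _ _ _ h₁) (hsub _ _ _ h₂)
      exact hne rfl
  · rw [Set.eq_univ_iff_forall] at hunion ⊢
    intro c
    have h := hunion c
    simp only [Set.mem_iUnion] at h ⊢
    obtain ⟨x, a, y, h⟩ := h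
    by_cases hf : c ∈ φ x a y
    · exact ⟨y, a, x, Or.inr hf⟩
    · exact ⟨x, a, y, Or.inl ⟨h, hf⟩⟩
end
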